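/- Let λ > -1/2 and let j, k be integers with 1 ≤ j < k. (i) If -1/2 < λ ≤ 0 or λ ≥ 1, then ((j-1/2)/(k-1/2))^{2λ-2} ≤ β̃_k²/β̃_j² ≤ ((j-1/2+λ)/(k-1/2+λ))^{2λ-2}. (ii) If 0 < λ ≤ 1, then ((j-1/2)/(k-1/2))^{2λ-2} ≥ β̃_k²/β̃_j² ≥ ((j-1/2+λ)/(k-1/2+λ))^{2λ-2}. -/

import Mathlib

/-- `h_x^2 = Γ(x+2λ)/((x+λ)Γ(x+1))`. -/
noncomputable def hsq (lam x : ℝ) : ℝ :=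
  Real.Gamma (x + 2*lam) / ((x + lam) * Real.Gamma (x + 1))

/-- `α_k = (2k-1+λ) h_{2k-1}`. -/
noncomputable def gegAlpha (lam : ℝ) (k : ℕ) : ℝ :=
  (2*(k:ℝ) - 1 + lam) * Real.sqrt (hsq lam (2*(k:ℝ) - 1))

/-- `β_k = 1/h_{2k}`. -/
noncomputable def gegBeta (lam : ℝ) (k : ℕ) : ℝ :=
  1 / Real.sqrt (hsq lam (2*(k:ℝ)))

/-- `α̃_k^2 = ((2k-2+λ) h_{2k-2})^2`, with `α̃_1^2 = λΓ(2λ) = Γ(2λ+1)/2`. -/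
noncomputable def gegAlphaTildeSq (lam : ℝ) (k : ℕ) : ℝ :=
  if k = 1 then Real.Gamma (2*lam + 1) / 2
  else (2*(k:ℝ) - 2 + lam)^2 * hsq lam (2*(k:ℝ) - 2)

/-- `β̃_k = 1/h_{2k-1}`. -/
noncomputable def gegBetaTilde (lam : ℝ) (k : ℕ) : ℝ :=
  1 / Real.sqrt (hsq lam (2*(k:ℝ) - 1))

/-- The matrix `A_m` with entries `a_{kj} = (Σ_{i=1}^{min(k,j)} α_i^2) β_k β_j` (1-based). -/
noncomputable def Amat (lam : ℝ) (m : ℕ) : Matrix (Fin m) (Fin m) ℝ :=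
  fun k j => (∑ i ∈ Finset.Icc 1 (min (k.val+1) (j.val+1)), (gegAlpha lam i)^2) *
    gegBeta lam (k.val+1) * gegBeta lam (j.val+1)

/-- The matrix `Ã_m` with entries `ã_{kj} = (Σ_{i=1}^{min(k,j)} α̃_i^2) β̃_k β̃_j` (1-based). -/
noncomputable def AmatTilde (lam : ℝ) (m : ℕ) : Matrix (Fin m) (Fin m) ℝ :=
  fun k j => (∑ i ∈ Finset.Icc 1 (min (k.val+1) (j.val+1)), gegAlphaTildeSq lam i) *
    gegBetaTilde lam (k.val+1) * gegBetaTilde lam (j.val+1)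

/-- `B_n = 4 A_m` for `n = 2m` and `B_n = 4 Ã_m` for `n = 2m-1`; in both cases `m = (n+1)/2`. -/
noncomputable def Bmat (lam : ℝ) (n : ℕ) : Matrix (Fin ((n+1)/2)) (Fin ((n+1)/2)) ℝ :=
  if n % 2 = 0 then (4:ℝ) • Amat lam ((n+1)/2) else (4:ℝ) • AmatTilde lam ((n+1)/2)

/-- Maximum absolute row-sum norm. -/
noncomputable def rowSumNorm {m : ℕ} (A : Matrix (Fin m) (Fin m) ℝ) : ℝ :=
  ⨆ k, ∑ j, |A k j|

/-- Squared Frobenius norm. -/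
noncomputable def frobSq {m : ℕ} (A : Matrix (Fin m) (Fin m) ℝ) : ℝ :=
  ∑ k, ∑ j, (A k j)^2

/-!
Both families of bounds are tested on unit steps `x → x + 1`, where the recursion of `Γ` turns
`h_x² / h_{x+1}²` into `(x + 1)(x + 1 + λ) / ((x + λ)(x + 2λ))`. The logarithm of the quotient of
this ratio and the claimed bound, viewed as a function of `λ`, vanishes at `λ = 0` and at `λ = 1`.
For the lower bound in (i) it is convex in `λ` at fixed `x`; for the upper bound it is convex (after
a change of sign) at fixed `u = x + 2λ`, provided `u ≥ 1`. A convex function with two zeros is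
nonpositive between them and nonnegative outside, which is why the inequalities reverse for
`0 ≤ λ ≤ 1`. The proviso `u ≥ 1` is automatic for `λ ≥ 1/2`; for `λ ≤ 1/2` the upper bound reduces
to Bernoulli's inequality with base `1 - 1 / (u + 1)` and exponent `2λ`.
-/

open Real Set

section Convexity

theorem le_of_convexOn_of_eq_of_le_or_le {s : Set ℝ} {f : ℝ → ℝ} {a b t : ℝ}
    (hf : ConvexOn ℝ s f) (ha : a ∈ s) (hb : b ∈ s) (ht : t ∈ s) (hab : a < b) (hfab : f a = f b)
    (h : t ≤ a ∨ b ≤ t) : f a ≤ f t := by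
  rcases h with hta | hbt
  · exact hf.le_left_of_right_le'' ht hb hta hab hfab.ge
  · exact hfab.trans_le (hf.le_right_of_left_le'' ha ht hab hbt hfab.le)

theorem le_of_convexOn_of_eq_of_mem_Icc {s : Set ℝ} {f : ℝ → ℝ} {a b t : ℝ}
    (hf : ConvexOn ℝ s f) (ha : a ∈ s) (hb : b ∈ s) (hfab : f a = f b) (ht : t ∈ Icc a b) :
    f t ≤ f a := by
  simpa [hfab] using hf.le_max_of_mem_Icc ha hb ht

theorem concaveOn_log_comp {E : Type*} [AddCommMonoid E] [SMul ℝ E] {s : Set E} {f : E → ℝ}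
    (hf : ConcaveOn ℝ s f) (hpos : ∀ x ∈ s, 0 < f x) : ConcaveOn ℝ s fun x => log (f x) :=
  ⟨hf.1, fun _ hx _ hy _ _ ha hb hab =>
    (strictConcaveOn_log_Ioi.concaveOn.2 (hpos _ hx) (hpos _ hy) ha hb hab).trans <|
      log_le_log (convex_Ioi (0 : ℝ) (hpos _ hx) (hpos _ hy) ha hb hab) (hf.2 hx hy ha hb hab)⟩

theorem convexOn_inv_comp {E : Type*} [AddCommMonoid E] [SMul ℝ E] {s : Set E} {f : E → ℝ}
    (hf : ConcaveOn ℝ s f) (hpos : ∀ x ∈ s, 0 < f x) : ConvexOn ℝ s fun x => (f x)⁻¹ :=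
  ⟨hf.1, fun x hx y hy _ _ ha hb hab =>
    (inv_anti₀ (convex_Ioi (0 : ℝ) (hpos _ hx) (hpos _ hy) ha hb hab)
      (hf.2 hx hy ha hb hab)).trans <| by
        simpa using (convexOn_zpow (𝕜 := ℝ) (-1)).2 (hpos x hx) (hpos y hy) ha hb hab⟩

theorem convexOn_affine {s : Set ℝ} (hs : Convex ℝ s) (c d : ℝ) :
    ConvexOn ℝ s fun t => c + d * t :=
  (convexOn_const c hs).add ((LinearMap.mulLeft ℝ d).convexOn hs)

theorem concaveOn_affine {s : Set ℝ} (hs : Convex ℝ s) (c d : ℝ) :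
    ConcaveOn ℝ s fun t => c + d * t :=
  (concaveOn_const c hs).add ((LinearMap.mulLeft ℝ d).concaveOn hs)

theorem convexOn_neg_log_affine {s : Set ℝ} (hs : Convex ℝ s) {c d : ℝ}
    (hpos : ∀ t ∈ s, 0 < c + d * t) : ConvexOn ℝ s fun t => -log (c + d * t) :=
  (concaveOn_log_comp (concaveOn_affine hs c d) hpos).neg

theorem convexOn_log_sub_log_mul_sub {E : Type*} [AddCommMonoid E] [SMul ℝ E] {s : Set E}
    {f : E → ℝ} {r κ : ℝ} (hf : ConcaveOn ℝ s f) (hpos : ∀ x ∈ s, 0 < f x) (hκ : 0 ≤ κ)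
    (hpos' : ∀ x ∈ s, 0 < r * f x - κ) :
    ConvexOn ℝ s fun x => log (f x) - log (r * f x - κ) := by
  have hdiv : ∀ x ∈ s, r - κ * (f x)⁻¹ = (r * f x - κ) / f x := fun x hx => by
    rw [sub_div, mul_div_cancel_right₀ _ (hpos x hx).ne', div_eq_mul_inv κ]
  have hconc : ConcaveOn ℝ s fun x => r - κ * (f x)⁻¹ :=
    (concaveOn_const r hf.1).sub ((convexOn_inv_comp hf hpos).smul hκ)
  refine (concaveOn_log_comp hconc fun x hx => ?_).neg.congr fun x hx => ?_
  · rw [hdiv x hx]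
    exact div_pos (hpos' x hx) (hpos x hx)
  · simp only [Pi.neg_apply]
    rw [hdiv x hx, log_div (hpos' x hx).ne' (hpos x hx).ne', neg_sub]

end Convexity

section LowerGap

/-- The logarithm of the quotient of `h_x² / h_{x+1}²` by `(x / (x + 1)) ^ (2t - 2)`, whose sign
decides the comparison with powers of `x` on a unit step. The parameter `λ` of `h` is called `t`
and comes last, because convexity in it is what matters. -/
noncomputable def lowerGap (x t : ℝ) : ℝ :=
  log (x + 1) + log (x + 1 + t) - log (x + t) - log (x + 2 * t) -
    (2 * t - 2) * (log x - log (x + 1))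

theorem lowerGap_zero (x : ℝ) : lowerGap x 0 = 0 := by
  simp only [lowerGap, mul_zero, add_zero]
  ring

theorem lowerGap_one (x : ℝ) : lowerGap x 1 = 0 := by
  rw [lowerGap, show x + 1 + 1 = x + 2 * 1 by ring]
  ring

theorem convexOn_lowerGap {x : ℝ} (hx : 0 < x) : ConvexOn ℝ (Ioi (-x / 2)) (lowerGap x) := by
  have hs := convex_Ioi (𝕜 := ℝ) (-x / 2)
  have hpos : ∀ t ∈ Ioi (-x / 2), 0 < x + 2 * t := fun t ht => by linarith [mem_Ioi.1 ht]
  have hlog := convexOn_log_sub_log_mul_sub (concaveOn_affine hs (x + 1) 1) (r := 1) (κ := 1)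
    (fun t ht => by linarith [hpos t ht]) zero_le_one (fun t ht => by linarith [hpos t ht])
  refine ((hlog.add (convexOn_neg_log_affine hs hpos)).add (convexOn_affine hs
    (log (x + 1) + 2 * (log x - log (x + 1))) (-2 * (log x - log (x + 1))))).congr fun t _ => ?_
  simp only [Pi.add_apply, lowerGap, one_mul]
  rw [show x + 1 + t - 1 = x + t by ring]
  ring

theorem lowerGap_nonneg {x t : ℝ} (hx : 0 < x) (hxt : 0 < x + 2 * t) (ht : t ≤ 0 ∨ 1 ≤ t) :
    0 ≤ lowerGap x t := by
  rw [← lowerGap_zero x]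
  refine le_of_convexOn_of_eq_of_le_or_le (convexOn_lowerGap hx) ?_ ?_ ?_ zero_lt_one
    ((lowerGap_zero x).trans (lowerGap_one x).symm) ht <;> rw [mem_Ioi] <;> linarith

theorem lowerGap_nonpos {x t : ℝ} (hx : 0 < x) (ht : t ∈ Icc 0 1) : lowerGap x t ≤ 0 := by
  rw [← lowerGap_zero x]
  refine le_of_convexOn_of_eq_of_mem_Icc (convexOn_lowerGap hx) ?_ ?_
    ((lowerGap_zero x).trans (lowerGap_one x).symm) ht <;> rw [mem_Ioi] <;> linarith

end LowerGap

section Bernoulli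

variable {s p : ℝ}

theorem mul_log_one_add_le_log_one_add_mul (hs : -1 < s) (hp : p ∈ Icc 0 1) :
    p * log (1 + s) ≤ log (1 + p * s) := by
  have hs' : 0 < 1 + s := by linarith
  rw [← log_rpow hs']
  exact log_le_log (rpow_pos_of_pos hs' p) (rpow_one_add_le_one_add_mul_self hs.le hp.1 hp.2)

theorem log_one_add_mul_le_mul_log_one_add (hs : -1 < s) (hp : p ≤ 0) (hps : 0 < 1 + p * s) :
    log (1 + p * s) ≤ p * log (1 + s) :=
  calc log (1 + p * s) ≤ 1 + p * s - 1 := log_le_sub_one_of_pos hps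
    _ = p * (1 + s - 1) := by ring
    _ ≤ p * log (1 + s) :=
      mul_le_mul_of_nonpos_left (log_le_sub_one_of_pos (by linarith)) hp

end Bernoulli

section UpperGap

/-- The logarithm of the quotient of `(u / (u + 1)) ^ (2t - 2)` by `h_x² / h_{x+1}²`, whose sign
decides the comparison with powers of `u = x + 2t` on a unit step. The parameter `λ` of `h` is
called `t`; `h` is expressed through `u` instead of `x` because convexity in `t` needs `u` fixed. -/
noncomputable def upperGap (u t : ℝ) : ℝ :=
  (2 * t - 2) * (log u - log (u + 1)) -
    (log (u + 1 - 2 * t) + log (u + 1 - t) - log (u - t) - log u)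

theorem upperGap_zero (u : ℝ) : upperGap u 0 = 0 := by
  simp only [upperGap, mul_zero, sub_zero]
  ring

theorem upperGap_one (u : ℝ) : upperGap u 1 = 0 := by
  rw [upperGap, show u + 1 - 2 * 1 = u - 1 by ring, show u + 1 - 1 = u by ring]
  ring

theorem convexOn_upperGap {u : ℝ} (hu : 1 ≤ u) :
    ConvexOn ℝ (Iio ((u + 1) / 2)) (upperGap u) := by
  have hs := convex_Iio (𝕜 := ℝ) ((u + 1) / 2)
  have hpos : ∀ t ∈ Iio ((u + 1) / 2), 0 < u + 1 - 2 * t := fun t ht => by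
    linarith [mem_Iio.1 ht]
  have hlog := convexOn_log_sub_log_mul_sub (concaveOn_affine hs u (-1)) (r := 2) (κ := u - 1)
    (fun t ht => by linarith [hpos t ht]) (sub_nonneg.2 hu) (fun t ht => by linarith [hpos t ht])
  have hneg_log := convexOn_neg_log_affine hs (c := u + 1) (d := -1)
    (fun t ht => by linarith [hpos t ht])
  refine ((hlog.add hneg_log).add (convexOn_affine hs
    (log u - 2 * (log u - log (u + 1))) (2 * (log u - log (u + 1))))).congr fun t _ => ?_
  simp only [Pi.add_apply, upperGap, neg_mul, one_mul, ← sub_eq_add_neg]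
  rw [show 2 * (u - t) - (u - 1) = u + 1 - 2 * t by ring]
  ring

theorem upperGap_eq_add {u t : ℝ} (hu : 0 < u) (htu : 2 * t < u + 1) :
    upperGap u t =
      (2 * t * log (1 + -(u + 1)⁻¹) - log (1 + 2 * t * -(u + 1)⁻¹)) +
        ((log (u - t) - log (u - t + 1)) - (log u - log (u + 1))) := by
  have hu' : u + 1 ≠ 0 := by linarith
  have hbase : 1 + -(u + 1)⁻¹ = u / (u + 1) := by
    field_simp
    ring
  have hlin : 1 + 2 * t * -(u + 1)⁻¹ = (u + 1 - 2 * t) / (u + 1) := by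
    field_simp
    ring
  rw [upperGap, hbase, hlin, log_div hu.ne' hu', log_div (by linarith) hu',
    show u + 1 - t = u - t + 1 by ring]
  ring

theorem monotoneOn_log_sub_log_add_one : MonotoneOn (fun u => log u - log (u + 1)) (Ioi 0) := by
  intro u (hu : 0 < u) v (hv : 0 < v) huv
  dsimp only
  rw [← log_div hu.ne' (by positivity), ← log_div hv.ne' (by positivity)]
  refine log_le_log (by positivity) ((div_le_div_iff₀ (by positivity) (by positivity)).2 ?_)
  linarith

theorem upperGap_nonneg_of_nonpos {u t : ℝ} (hu : 0 < u) (ht : t ≤ 0) : 0 ≤ upperGap u t := by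
  have hinv : (u + 1)⁻¹ < 1 := inv_lt_one_of_one_lt₀ (by linarith)
  have hinv_pos : 0 < (u + 1)⁻¹ := by positivity
  rw [upperGap_eq_add hu (by linarith)]
  exact add_nonneg (sub_nonneg.2 <| log_one_add_mul_le_mul_log_one_add (by linarith)
    (by linarith) (by nlinarith)) <| sub_nonneg.2 <|
      monotoneOn_log_sub_log_add_one hu (mem_Ioi.2 (by linarith)) (by linarith)

theorem upperGap_nonpos_of_le_half {u t : ℝ} (htu : 2 * t < u) (ht : 0 ≤ t) (ht' : t ≤ 1 / 2) :
    upperGap u t ≤ 0 := by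
  have hu : 0 < u := by linarith
  have hinv : (u + 1)⁻¹ < 1 := inv_lt_one_of_one_lt₀ (by linarith)
  rw [upperGap_eq_add hu (by linarith)]
  exact add_nonpos (sub_nonpos.2 <| mul_log_one_add_le_log_one_add_mul (by linarith)
    ⟨by linarith, by linarith⟩) <| sub_nonpos.2 <|
      monotoneOn_log_sub_log_add_one (mem_Ioi.2 (by linarith)) hu (by linarith)

theorem upperGap_nonneg {u t : ℝ} (hu : 0 < u) (htu : 2 * t < u) (ht : t ≤ 0 ∨ 1 ≤ t) :
    0 ≤ upperGap u t := by
  rcases ht with ht | ht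
  · exact upperGap_nonneg_of_nonpos hu ht
  · rw [← upperGap_zero u]
    refine le_of_convexOn_of_eq_of_le_or_le (convexOn_upperGap (by linarith)) ?_ ?_ ?_ zero_lt_one
      ((upperGap_zero u).trans (upperGap_one u).symm) (.inr ht) <;> rw [mem_Iio] <;> linarith

theorem upperGap_nonpos {u t : ℝ} (htu : 2 * t < u) (ht : t ∈ Icc 0 1) : upperGap u t ≤ 0 := by
  rcases le_total t (1 / 2) with ht' | ht'
  · exact upperGap_nonpos_of_le_half htu ht.1 ht'
  · rw [← upperGap_zero u]
    refine le_of_convexOn_of_eq_of_mem_Icc (convexOn_upperGap (by linarith)) ?_ ?_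
      ((upperGap_zero u).trans (upperGap_one u).symm) ht <;> rw [mem_Iio] <;> linarith

end UpperGap

section Hsq

variable {lam x : ℝ}

theorem hsq_pos (hx : 0 < x) (hxlam : 0 < x + 2 * lam) : 0 < hsq lam x :=
  div_pos (Gamma_pos_of_pos hxlam) (mul_pos (by linarith) (Gamma_pos_of_pos (by linarith)))

theorem hsq_div_hsq_add_one (hx : 0 < x) (hxlam : 0 < x + 2 * lam) :
    hsq lam x / hsq lam (x + 1) =
      (x + 1) * (x + 1 + lam) / ((x + lam) * (x + 2 * lam)) := by
  have hGamma : Gamma (x + 1 + 2 * lam) = (x + 2 * lam) * Gamma (x + 2 * lam) := by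
    rw [← Gamma_add_one hxlam.ne', add_right_comm]
  have hGamma_ne := (Gamma_pos_of_pos hxlam).ne'
  have hGamma_ne' := (Gamma_pos_of_pos (show 0 < x + 1 by linarith)).ne'
  have hxlam' : 0 < x + lam := by linarith
  have hxlam'' : 0 < x + 1 + lam := by linarith
  rw [hsq, hsq, hGamma, Gamma_add_one (show x + 1 ≠ 0 by linarith)]
  field_simp

theorem log_hsq_sub_log_hsq_add_one (hx : 0 < x) (hxlam : 0 < x + 2 * lam) :
    log (hsq lam x) - log (hsq lam (x + 1)) =
      log (x + 1) + log (x + 1 + lam) - log (x + lam) - log (x + 2 * lam) := by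
  have h₁ : x + 1 ≠ 0 := by linarith
  have h₂ : x + 1 + lam ≠ 0 := by linarith
  have h₃ : x + lam ≠ 0 := by linarith
  rw [← log_div (hsq_pos hx hxlam).ne' (hsq_pos (by linarith) (by linarith)).ne',
    hsq_div_hsq_add_one hx hxlam, log_div (mul_ne_zero h₁ h₂) (mul_ne_zero h₃ hxlam.ne'),
    log_mul h₁ h₂, log_mul h₃ hxlam.ne']
  ring

theorem lowerGap_eq_sub (hx : 0 < x) (hxlam : 0 < x + 2 * lam) :
    lowerGap x lam = ((2 * lam - 2) * log (x + 1) - log (hsq lam (x + 1))) -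
      ((2 * lam - 2) * log x - log (hsq lam x)) := by
  rw [lowerGap, ← log_hsq_sub_log_hsq_add_one hx hxlam]
  ring

theorem upperGap_eq_sub (hx : 0 < x) (hxlam : 0 < x + 2 * lam) :
    upperGap (x + 2 * lam) lam = ((2 * lam - 2) * log (x + 2 * lam) - log (hsq lam x)) -
      ((2 * lam - 2) * log (x + 1 + 2 * lam) - log (hsq lam (x + 1))) := by
  have hlog := log_hsq_sub_log_hsq_add_one hx hxlam
  rw [upperGap, show x + 2 * lam + 1 - 2 * lam = x + 1 by ring,
    show x + 2 * lam + 1 - lam = x + 1 + lam by ring, show x + 2 * lam - lam = x + lam by ring,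
    show x + 2 * lam + 1 = x + 1 + 2 * lam by ring]
  linarith

end Hsq

section Iteration

theorem rpow_div_le_div_of_monotone_log {ι : Type*} [Preorder ι] {a b : ι → ℝ} {e : ℝ}
    (ha : ∀ i, 0 < a i) (hb : ∀ i, 0 < b i) (h : Monotone fun i => e * log (a i) - log (b i))
    {i j : ι} (hij : i ≤ j) : (a i / a j) ^ e ≤ b i / b j := by
  have hdiv := div_pos (ha i) (ha j)
  rw [← log_le_log_iff (rpow_pos_of_pos hdiv e) (div_pos (hb i) (hb j)), log_rpow hdiv,
    log_div (ha i).ne' (ha j).ne', log_div (hb i).ne' (hb j).ne']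
  linarith [h hij]

theorem div_le_rpow_div_of_antitone_log {ι : Type*} [Preorder ι] {a b : ι → ℝ} {e : ℝ}
    (ha : ∀ i, 0 < a i) (hb : ∀ i, 0 < b i) (h : Antitone fun i => e * log (a i) - log (b i))
    {i j : ι} (hij : i ≤ j) : b i / b j ≤ (a i / a j) ^ e := by
  have hdiv := div_pos (ha i) (ha j)
  rw [← log_le_log_iff (div_pos (hb i) (hb j)) (rpow_pos_of_pos hdiv e), log_rpow hdiv,
    log_div (ha i).ne' (ha j).ne', log_div (hb i).ne' (hb j).ne']
  linarith [h hij]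

end Iteration
section UnitSteps

variable {lam x : ℝ}

theorem monotone_log_sub_log_hsq (hx : 0 < x) (hxlam : 0 < x + 2 * lam) (h : lam ≤ 0 ∨ 1 ≤ lam) :
    Monotone fun n : ℕ => (2 * lam - 2) * log (x + n) - log (hsq lam (x + n)) := by
  refine monotone_nat_of_le_succ fun n => sub_nonneg.1 ?_
  rw [Nat.cast_succ, ← add_assoc, ← lowerGap_eq_sub (by positivity) (by linarith)]
  exact lowerGap_nonneg (by positivity) (by linarith) h

theorem antitone_log_sub_log_hsq (hx : 0 < x) (h : lam ∈ Icc 0 1) :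
    Antitone fun n : ℕ => (2 * lam - 2) * log (x + n) - log (hsq lam (x + n)) := by
  have h0 := h.1
  refine antitone_nat_of_succ_le fun n => sub_nonpos.1 ?_
  rw [Nat.cast_succ, ← add_assoc, ← lowerGap_eq_sub (by positivity) (by positivity)]
  exact lowerGap_nonpos (by positivity) h

theorem antitone_log_add_two_mul_sub_log_hsq (hx : 0 < x) (hxlam : 0 < x + 2 * lam)
    (h : lam ≤ 0 ∨ 1 ≤ lam) :
    Antitone fun n : ℕ => (2 * lam - 2) * log (x + n + 2 * lam) - log (hsq lam (x + n)) := by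
  refine antitone_nat_of_succ_le fun n => sub_nonneg.1 ?_
  have hxn : 0 < x + n := by positivity
  have hxnlam : 0 < x + n + 2 * lam := by linarith [n.cast_nonneg (α := ℝ)]
  rw [Nat.cast_succ, ← add_assoc, ← upperGap_eq_sub hxn hxnlam]
  exact upperGap_nonneg hxnlam (by linarith) h

theorem monotone_log_add_two_mul_sub_log_hsq (hx : 0 < x) (h : lam ∈ Icc 0 1) :
    Monotone fun n : ℕ => (2 * lam - 2) * log (x + n + 2 * lam) - log (hsq lam (x + n)) := by
  have h0 := h.1
  refine monotone_nat_of_le_succ fun n => sub_nonpos.1 ?_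
  have hxn : 0 < x + n := by positivity
  rw [Nat.cast_succ, ← add_assoc, ← upperGap_eq_sub hxn (by positivity)]
  exact upperGap_nonpos (by linarith) h

end UnitSteps

theorem betaTilde_ratio_bounds_general {lam x : ℝ} (hx : 0 < x) (hxlam : 0 < x + 2 * lam) (n : ℕ) :
    ((lam ≤ 0 ∨ 1 ≤ lam) →
      (x / (x + n)) ^ (2 * lam - 2) ≤ hsq lam x / hsq lam (x + n) ∧
      hsq lam x / hsq lam (x + n) ≤
        ((x + 2 * lam) / (x + n + 2 * lam)) ^ (2 * lam - 2)) ∧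
    (0 ≤ lam → lam ≤ 1 →
      ((x + 2 * lam) / (x + n + 2 * lam)) ^ (2 * lam - 2) ≤ hsq lam x / hsq lam (x + n) ∧
      hsq lam x / hsq lam (x + n) ≤ (x / (x + n)) ^ (2 * lam - 2)) := by
  have ha : ∀ i : ℕ, 0 < x + i := fun i => by positivity
  have ha' : ∀ i : ℕ, 0 < x + i + 2 * lam := fun i => by linarith [i.cast_nonneg (α := ℝ)]
  have hb : ∀ i : ℕ, 0 < hsq lam (x + i) := fun i => hsq_pos (ha i) (ha' i)
  refine ⟨fun h => ⟨?_, ?_⟩, fun h0 h1 => ⟨?_, ?_⟩⟩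
  · simpa using rpow_div_le_div_of_monotone_log ha hb
      (monotone_log_sub_log_hsq hx hxlam h) n.zero_le
  · simpa using div_le_rpow_div_of_antitone_log ha' hb
      (antitone_log_add_two_mul_sub_log_hsq hx hxlam h) n.zero_le
  · simpa using rpow_div_le_div_of_monotone_log ha' hb
      (monotone_log_add_two_mul_sub_log_hsq hx ⟨h0, h1⟩) n.zero_le
  · simpa using div_le_rpow_div_of_antitone_log ha hb
      (antitone_log_sub_log_hsq hx ⟨h0, h1⟩) n.zero_le

theorem gegBetaTilde_sq {lam : ℝ} {k : ℕ} (h : 0 ≤ hsq lam (2 * k - 1)) :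
    gegBetaTilde lam k ^ 2 = (hsq lam (2 * k - 1))⁻¹ := by
  rw [gegBetaTilde, div_pow, sq_sqrt h, one_pow, one_div]

theorem sub_half_add_div_sub_half_add (a b c : ℝ) :
    (a - 1 / 2 + c) / (b - 1 / 2 + c) = (2 * a - 1 + 2 * c) / (2 * b - 1 + 2 * c) := by
  rw [← mul_div_mul_left _ _ two_ne_zero]
  ring_nf

theorem betaTilde_ratio_bounds (lam : ℝ) (hlam : -(1/2 : ℝ) < lam)
    (j k : ℕ) (hj : 1 ≤ j) (hjk : j < k) :
    ((lam ≤ 0 ∨ 1 ≤ lam) →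
      (((j : ℝ) - 1/2)/((k : ℝ) - 1/2)) ^ (2*lam - 2)
          ≤ (gegBetaTilde lam k)^2 / (gegBetaTilde lam j)^2 ∧
      (gegBetaTilde lam k)^2 / (gegBetaTilde lam j)^2
          ≤ (((j : ℝ) - 1/2 + lam)/((k : ℝ) - 1/2 + lam)) ^ (2*lam - 2)) ∧
    (0 < lam → lam ≤ 1 →
      (((j : ℝ) - 1/2 + lam)/((k : ℝ) - 1/2 + lam)) ^ (2*lam - 2)
          ≤ (gegBetaTilde lam k)^2 / (gegBetaTilde lam j)^2 ∧
      (gegBetaTilde lam k)^2 / (gegBetaTilde lam j)^2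
          ≤ (((j : ℝ) - 1/2)/((k : ℝ) - 1/2)) ^ (2*lam - 2)) := by
  have hj' : (1 : ℝ) ≤ j := by exact_mod_cast hj
  have hjk' : (j : ℝ) < k := by exact_mod_cast hjk
  have hx : (2 * j - 1 : ℝ) + (2 * (k - j) : ℕ) = 2 * k - 1 := by
    push_cast [Nat.cast_sub hjk.le]
    ring
  have hbounds := betaTilde_ratio_bounds_general (lam := lam) (x := 2 * j - 1)
    (by linarith) (by linarith) (2 * (k - j))
  have hlow := sub_half_add_div_sub_half_add (j : ℝ) k 0
  simp only [mul_zero, add_zero] at hlow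
  rw [gegBetaTilde_sq (hsq_pos (by linarith) (by linarith)).le,
    gegBetaTilde_sq (hsq_pos (by linarith) (by linarith)).le, inv_div_inv, hlow,
    sub_half_add_div_sub_half_add, ← hx]
  exact ⟨hbounds.1, fun h0 => hbounds.2 h0.le⟩
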